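/- Let n : ℕ, b : Fin n → Fin 4, and let E be any complex matrix indexed by (Fin n → Fin 2). Then (P_b * E * P_b + E)/2 = ∑_{a ∈ S} ((trace (E * P_a))/2^n) • P_a, where S is the finite set of all a : Fin n → Fin 4 such that P_a * P_b = P_b * P_a. That is, one layer of Pauli check sandwiching with check P_b eliminates exactly the anticommuting terms from the Pauli expansion of the Kraus operator E. -/

import Mathlib

open Matrix Complex Kronecker

noncomputable def pauli : Fin 4 → Matrix (Fin 2) (Fin 2) ℂ
  | 0 => !![1, 0; 0, 1]
  | 1 => !![0, 1; 1, 0]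
  | 2 => !![0, -Complex.I; Complex.I, 0]
  | 3 => !![1, 0; 0, -1]

noncomputable def PauliString {n : ℕ} (a : Fin n → Fin 4) :
    Matrix (Fin n → Fin 2) (Fin n → Fin 2) ℂ :=
  Matrix.of fun f g => ∏ i, pauli (a i) (f i) (g i)

lemma prod_sum_fun {n : ℕ} {α : Type} [Fintype α] [DecidableEq α] (F : Fin n → α → ℂ) :
    ∑ x : Fin n → α, ∏ i, F i (x i) = ∏ i, ∑ j, F i j := by
  rw [Finset.prod_univ_sum, Fintype.piFinset_univ]

lemma pauliString_mul {n : ℕ} (a b : Fin n → Fin 4) (f g : Fin n → Fin 2) :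
    (PauliString a * PauliString b) f g = ∏ i, (pauli (a i) * pauli (b i)) (f i) (g i) := by
  simp only [Matrix.mul_apply, PauliString, Matrix.of_apply, ← Finset.prod_mul_distrib]
  exact prod_sum_fun (fun i x => pauli (a i) (f i) x * pauli (b i) x (g i))

lemma pauli_sq (c : Fin 4) : pauli c * pauli c = 1 := by
  fin_cases c <;> ext i j <;> fin_cases i <;> fin_cases j <;>
    simp [pauli, Matrix.mul_apply, Fin.sum_univ_two]

lemma pauliString_sq {n : ℕ} (b : Fin n → Fin 4) : PauliString b * PauliString b = 1 := by
  ext f g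
  rw [pauliString_mul]
  simp only [pauli_sq, Matrix.one_apply]
  rw [Finset.prod_ite_zero]
  simp [funext_iff]

lemma pauli_comm (c d : Fin 4) : ∃ s : ℂ, (s = 1 ∨ s = -1) ∧
    pauli c * pauli d = s • (pauli d * pauli c) := by
  by_cases h : c = 0 ∨ d = 0 ∨ c = d
  · refine ⟨1, Or.inl rfl, ?_⟩
    revert h
    fin_cases c <;> fin_cases d <;> intro h <;> first | (exfalso; revert h; decide) |
      (ext i j; fin_cases i <;> fin_cases j <;>
        simp [pauli, Matrix.mul_apply, Fin.sum_univ_two])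
  · refine ⟨-1, Or.inr rfl, ?_⟩
    revert h
    fin_cases c <;> fin_cases d <;> intro h <;> first | (exfalso; revert h; decide) |
      (ext i j; fin_cases i <;> fin_cases j <;>
        simp [pauli, Matrix.mul_apply, Fin.sum_univ_two])

lemma pauliString_comm {n : ℕ} (a b : Fin n → Fin 4) : ∃ s : ℂ, (s = 1 ∨ s = -1) ∧
    PauliString a * PauliString b = s • (PauliString b * PauliString a) := by
  choose s hs h using fun i => pauli_comm (a i) (b i)
  refine ⟨∏ i, s i, ?_, ?_⟩
  · refine Finset.prod_induction s (fun x => x = 1 ∨ x = -1) ?_ (Or.inl rfl) (fun i _ => hs i)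
    rintro x y (rfl | rfl) (rfl | rfl) <;> simp
  · ext f g
    rw [Matrix.smul_apply, pauliString_mul, pauliString_mul, smul_eq_mul,
      ← Finset.prod_mul_distrib]
    refine Finset.prod_congr rfl fun i _ => ?_
    rw [h i, Matrix.smul_apply, smul_eq_mul]

lemma pauli_complete (x y z w : Fin 2) :
    ∑ c, pauli c x y * pauli c z w = if x = w ∧ y = z then 2 else 0 := by
  fin_cases x <;> fin_cases y <;> fin_cases z <;> fin_cases w <;>
    simp [pauli, Fin.sum_univ_four] <;> norm_num

lemma pauliString_complete {n : ℕ} (f g h k : Fin n → Fin 2) :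
    ∑ a, PauliString a f g * PauliString a h k = if f = k ∧ g = h then (2 : ℂ) ^ n else 0 := by
  simp only [PauliString, Matrix.of_apply, ← Finset.prod_mul_distrib]
  rw [prod_sum_fun (fun i c => pauli c (f i) (g i) * pauli c (h i) (k i))]
  simp only [pauli_complete]
  rw [Finset.prod_ite_zero]
  simp [funext_iff, forall_and]

lemma pauli_expand {n : ℕ} (E : Matrix (Fin n → Fin 2) (Fin n → Fin 2) ℂ) :
    E = ∑ a, (Matrix.trace (E * PauliString a) / (2 : ℂ) ^ n) • PauliString a := by
  ext f g
  have h2 : (2 : ℂ) ^ n ≠ 0 := pow_ne_zero _ two_ne_zero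
  have key : ∑ a, Matrix.trace (E * PauliString a) * PauliString a f g = E f g * 2 ^ n := by
    simp only [Matrix.trace, Matrix.diag, Matrix.mul_apply, Finset.sum_mul]
    rw [Finset.sum_comm]
    have : ∀ x : Fin n → Fin 2, ∑ a, ∑ y, E x y * PauliString a y x * PauliString a f g
        = ∑ y, if y = g ∧ x = f then E x y * 2 ^ n else 0 := by
      intro x
      rw [Finset.sum_comm]
      refine Finset.sum_congr rfl fun y _ => ?_
      simp only [mul_assoc, ← Finset.mul_sum, pauliString_complete, mul_ite, mul_zero]
    simp only [this, ite_and]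
    simp
  simp only [Matrix.sum_apply, Matrix.smul_apply, smul_eq_mul, div_mul_eq_mul_div]
  rw [← Finset.sum_div, key, mul_div_cancel_right₀ _ h2]

theorem single_layer_eliminates_anticommuting_terms (n : ℕ) (b : Fin n → Fin 4)
    (E : Matrix (Fin n → Fin 2) (Fin n → Fin 2) ℂ) :
    ((1 : ℂ) / 2) • (PauliString b * E * PauliString b + E) =
      ∑ a ∈ Finset.univ.filter
          (fun a : Fin n → Fin 4 =>
            PauliString a * PauliString b = PauliString b * PauliString a),
        (Matrix.trace (E * PauliString a) / (2 : ℂ) ^ n) • PauliString a := by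
  rw [Finset.sum_filter]
  conv_lhs => rw [pauli_expand E]
  rw [Finset.mul_sum, Finset.sum_mul, ← Finset.sum_add_distrib, Finset.smul_sum]
  refine Finset.sum_congr rfl fun a _ => ?_
  rw [Matrix.mul_smul, Matrix.smul_mul]
  split_ifs with h
  · rw [← h, mul_assoc, pauliString_sq, mul_one, ← two_smul ℂ, smul_smul]
    norm_num
  · obtain ⟨s, rfl | rfl, hs⟩ := pauliString_comm a b
    · exact absurd (by simpa using hs) h
    · have : PauliString b * PauliString a = -(PauliString a * PauliString b) := by
        rw [hs]; simp
      rw [this, neg_mul, mul_assoc, pauliString_sq, mul_one]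
      simp
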